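/- arXiv:1808.06234 — 3 statements merged into one kernel-verified Lean document; each statement's English description precedes it below -/
import Mathlib

section
/- Let f ∈ C_c^∞(ℝ²). Then there is an absolute constant C such that ‖f‖_{L⁴(ℝ²)} ≤ C ‖f‖_{L¹(ℝ²)}^{1/2} ‖∇²f‖_{L²(ℝ²)}^{1/2}. -/
open MeasureTheory

/-- The square of a compactly supported real function is compactly supported. -/
theorem HasCompactSupport.sq_real {X : Type*} [TopologicalSpace X] {f : X → ℝ}
    (hf : HasCompactSupport f) : HasCompactSupport fun x ↦ f x ^ 2 := by
  simp only [sq]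
  exact hf.mul_right

section CompactlySupported

variable {X : Type*} [TopologicalSpace X] [MeasurableSpace X] [OpensMeasurableSpace X]
  {μ : Measure X} [IsFiniteMeasureOnCompacts μ]

/-- Cauchy–Schwarz for continuous real functions with compact support. -/
theorem sq_integral_mul_le_of_hasCompactSupport {f g : X → ℝ} (hf : Continuous f)
    (hg : Continuous g) (hfc : HasCompactSupport f) (hgc : HasCompactSupport g) :
    (∫ x, f x * g x ∂μ) ^ 2 ≤ (∫ x, f x ^ 2 ∂μ) * ∫ x, g x ^ 2 ∂μ := by
  have hff : Integrable (fun x ↦ f x ^ 2) μ :=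
    (hf.pow 2).integrable_of_hasCompactSupport hfc.sq_real
  have hgg : Integrable (fun x ↦ g x ^ 2) μ :=
    (hg.pow 2).integrable_of_hasCompactSupport hgc.sq_real
  have hfg : Integrable (fun x ↦ f x * g x) μ :=
    (hf.mul hg).integrable_of_hasCompactSupport hfc.mul_right
  have key : ∀ t : ℝ, 0 ≤ (∫ x, g x ^ 2 ∂μ) * (t * t) + (2 * ∫ x, f x * g x ∂μ) * t
      + ∫ x, f x ^ 2 ∂μ := by
    intro t
    have h : ∫ x, (f x + t * g x) ^ 2 ∂μ = (∫ x, g x ^ 2 ∂μ) * (t * t)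
        + (2 * ∫ x, f x * g x ∂μ) * t + ∫ x, f x ^ 2 ∂μ := by
      have hexp : ∀ x, (f x + t * g x) ^ 2
          = (t * t) * g x ^ 2 + (2 * t) * (f x * g x) + f x ^ 2 := fun x ↦ by ring
      simp_rw [hexp]
      rw [integral_add (by fun_prop) hff,
        integral_add (hgg.const_mul _) (hfg.const_mul _), integral_const_mul, integral_const_mul]
      ring
    rw [← h]
    positivity
  have := discrim_le_zero key
  rw [discrim] at this
  nlinarith

/-- Log-convexity of the `Lᵖ` norms: `‖f‖₂⁶ ≤ ‖f‖₁² ‖f‖₄⁴`. -/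
theorem integral_sq_pow_three_le {f : X → ℝ} (hf : Continuous f) (hfc : HasCompactSupport f) :
    (∫ x, f x ^ 2 ∂μ) ^ 3 ≤ (∫ x, |f x| ∂μ) ^ 2 * ∫ x, f x ^ 4 ∂μ := by
  have hB : 0 ≤ ∫ x, f x ^ 2 ∂μ := by positivity
  have hT : 0 ≤ ∫ x, |f x| ^ 3 ∂μ := by positivity
  have hA : 0 ≤ ∫ x, |f x| ∂μ := by positivity
  have h₁ : (∫ x, f x ^ 2 ∂μ) ^ 2 ≤ (∫ x, |f x| ∂μ) * ∫ x, |f x| ^ 3 ∂μ := by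
    have h := sq_integral_mul_le_of_hasCompactSupport (μ := μ)
      (f := fun x ↦ √|f x|) (g := fun x ↦ √|f x| * |f x|) (by fun_prop) (by fun_prop)
      (hfc.comp_left (g := fun y ↦ √|y|) (by simp))
      (hfc.comp_left (g := fun y ↦ √|y| * |y|) (by simp))
    have e₁ : ∀ x, √|f x| * (√|f x| * |f x|) = f x ^ 2 := fun x ↦ by
      rw [← mul_assoc, Real.mul_self_sqrt (abs_nonneg _), abs_mul_abs_self, sq]
    have e₂ : ∀ x, (√|f x| * |f x|) ^ 2 = |f x| ^ 3 := fun x ↦ by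
      rw [mul_pow, Real.sq_sqrt (abs_nonneg _)]; ring
    simpa only [e₁, e₂, Real.sq_sqrt (abs_nonneg _)] using h
  have h₂ : (∫ x, |f x| ^ 3 ∂μ) ^ 2 ≤ (∫ x, f x ^ 2 ∂μ) * ∫ x, f x ^ 4 ∂μ := by
    have h := sq_integral_mul_le_of_hasCompactSupport (μ := μ)
      (f := fun x ↦ |f x|) (g := fun x ↦ f x ^ 2) (by fun_prop) (by fun_prop)
      (hfc.comp_left (g := fun y ↦ |y|) (by simp))
      hfc.sq_real
    have e₁ : ∀ x, |f x| * f x ^ 2 = |f x| ^ 3 := fun x ↦ by rw [← sq_abs]; ring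
    have e₂ : ∀ x, (f x ^ 2) ^ 2 = f x ^ 4 := fun x ↦ by ring
    simpa only [e₁, e₂, sq_abs] using h
  rcases hB.eq_or_lt with h0 | h0
  · rw [← h0, zero_pow three_ne_zero]
    exact mul_nonneg (sq_nonneg _) (integral_nonneg fun x ↦ by positivity)
  · refine le_of_mul_le_mul_left ?_ h0
    calc _ = ((∫ x, f x ^ 2 ∂μ) ^ 2) ^ 2 := by ring
      _ ≤ ((∫ x, |f x| ∂μ) * ∫ x, |f x| ^ 3 ∂μ) ^ 2 := by gcongr
      _ = (∫ x, |f x| ∂μ) ^ 2 * (∫ x, |f x| ^ 3 ∂μ) ^ 2 := by ring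
      _ ≤ (∫ x, |f x| ∂μ) ^ 2 * ((∫ x, f x ^ 2 ∂μ) * ∫ x, f x ^ 4 ∂μ) := by gcongr
      _ = _ := by ring

end CompactlySupported

/-- The operator norm on the dual of `ℝ × ℝ` is controlled by the values on the basis. -/
theorem sq_norm_le_two_mul_sq_apply_add_sq_apply (L : ℝ × ℝ →L[ℝ] ℝ) :
    ‖L‖ ^ 2 ≤ 2 * (L (1, 0) ^ 2 + L (0, 1) ^ 2) := by
  have h : ‖L‖ ≤ |L (1, 0)| + |L (0, 1)| := by
    refine L.opNorm_le_bound (by positivity) fun z ↦ ?_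
    have hz : L z = z.1 * L (1, 0) + z.2 * L (0, 1) := by
      rw [← smul_eq_mul, ← smul_eq_mul, ← map_smul, ← map_smul, ← map_add]
      simp
    rw [hz, add_mul]
    refine (abs_add_le _ _).trans ?_
    rw [abs_mul, abs_mul, mul_comm |z.1|, mul_comm |z.2|]
    gcongr
    · exact norm_fst_le z
    · exact norm_snd_le z
  calc ‖L‖ ^ 2 ≤ (|L (1, 0)| + |L (0, 1)|) ^ 2 := by gcongr
    _ ≤ 2 * (|L (1, 0)| ^ 2 + |L (0, 1)| ^ 2) := add_sq_le
    _ = _ := by simp only [sq_abs]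

/-- Integration by parts: `‖∂ᵥf‖₂² ≤ ∫ |f| ‖∇²f‖` for a unit vector `v`. -/
theorem integral_sq_fderiv_apply_le {E : Type*} [NormedAddCommGroup E] [NormedSpace ℝ E]
    [FiniteDimensional ℝ E] [MeasurableSpace E] [BorelSpace E] {μ : Measure E}
    [μ.IsAddHaarMeasure] {f : E → ℝ} (hf : ContDiff ℝ 2 f) (hfc : HasCompactSupport f)
    {v : E} (hv : ‖v‖ ≤ 1) :
    ∫ x, fderiv ℝ f x v ^ 2 ∂μ ≤ ∫ x, |f x| * ‖iteratedFDeriv ℝ 2 f x‖ ∂μ := by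
  have hD : ContDiff ℝ 1 (fderiv ℝ f) := hf.fderiv_right (by norm_num)
  have hg : ContDiff ℝ 1 (fun x ↦ fderiv ℝ f x v) := hD.clm_apply contDiff_const
  have hgc : HasCompactSupport (fun x ↦ fderiv ℝ f x v) := hfc.fderiv_apply ℝ v
  have hg' : Continuous (fun x ↦ fderiv ℝ (fun y ↦ fderiv ℝ f y v) x v) :=
    (hg.continuous_fderiv one_ne_zero).clm_apply continuous_const
  have hH : Continuous (iteratedFDeriv ℝ 2 f) := hf.continuous_iteratedFDeriv le_rfl
  have hi : Integrable (fun x ↦ f x * fderiv ℝ (fun y ↦ fderiv ℝ f y v) x v) μ :=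
    (hf.continuous.mul hg').integrable_of_hasCompactSupport hfc.mul_right
  have hparts : ∫ x, fderiv ℝ f x v ^ 2 ∂μ
      = -∫ x, f x * fderiv ℝ (fun y ↦ fderiv ℝ f y v) x v ∂μ := by
    rw [integral_mul_fderiv_eq_neg_fderiv_mul_of_integrable
      ((hg.continuous.mul hg.continuous).integrable_of_hasCompactSupport hgc.mul_right) hi
      ((hf.continuous.mul hg.continuous).integrable_of_hasCompactSupport hfc.mul_right)
      (fun x _ ↦ hf.differentiable two_ne_zero x) (fun x _ ↦ hg.differentiable one_ne_zero x),
      neg_neg]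
    simp only [sq]
  rw [hparts, ← integral_neg]
  refine integral_mono hi.neg ((hf.continuous.abs.mul hH.norm).integrable_of_hasCompactSupport
    (HasCompactSupport.mul_right (hfc.comp_left (g := fun y ↦ |y|) (by simp)))) fun x ↦ ?_
  refine (neg_le_abs _).trans ?_
  rw [abs_mul]
  gcongr
  have hx : fderiv ℝ (fun y ↦ fderiv ℝ f y v) x v = iteratedFDeriv ℝ 2 f x ![v, v] := by
    rw [iteratedFDeriv_two_apply, fderiv_clm_apply (hD.differentiable one_ne_zero x) (by fun_prop)]
    simp
  rw [hx, ← Real.norm_eq_abs]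
  refine ((iteratedFDeriv ℝ 2 f x).le_opNorm _).trans ?_
  refine mul_le_of_le_one_right (norm_nonneg _) (Finset.prod_le_one (by simp) fun i _ ↦ ?_)
  fin_cases i <;> simpa using hv

/-- The interpolation `‖∇f‖₂² ≤ 4 ‖f‖₂ ‖∇²f‖₂` in the plane, squared. -/
theorem sq_integral_sq_norm_fderiv_le {f : ℝ × ℝ → ℝ} (hf : ContDiff ℝ 2 f)
    (hfc : HasCompactSupport f) :
    (∫ x, ‖fderiv ℝ f x‖ ^ 2) ^ 2
      ≤ 16 * ((∫ x, f x ^ 2) * ∫ x, ‖iteratedFDeriv ℝ 2 f x‖ ^ 2) := by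
  have hD : Continuous (fderiv ℝ f) := hf.continuous_fderiv two_ne_zero
  have hi (v : ℝ × ℝ) : Integrable (fun x ↦ fderiv ℝ f x v ^ 2) :=
    ((hD.clm_apply continuous_const).pow 2).integrable_of_hasCompactSupport
      (hfc.fderiv_apply ℝ v).sq_real
  have h₁ : ∫ x, ‖fderiv ℝ f x‖ ^ 2 ≤ 4 * ∫ x, |f x| * ‖iteratedFDeriv ℝ 2 f x‖ := by
    calc ∫ x, ‖fderiv ℝ f x‖ ^ 2
        ≤ ∫ x, 2 * (fderiv ℝ f x (1, 0) ^ 2 + fderiv ℝ f x (0, 1) ^ 2) :=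
          integral_mono
            ((hD.norm.pow 2).integrable_of_hasCompactSupport
              (hfc.fderiv ℝ).norm.sq_real)
            (((hi _).add (hi _)).const_mul 2)
            fun x ↦ sq_norm_le_two_mul_sq_apply_add_sq_apply _
      _ = 2 * ((∫ x, fderiv ℝ f x (1, 0) ^ 2) + ∫ x, fderiv ℝ f x (0, 1) ^ 2) := by
          rw [integral_const_mul, integral_add (hi _) (hi _)]
      _ ≤ _ := by
          have hx := integral_sq_fderiv_apply_le (μ := volume) hf hfc (v := (1, 0)) (by simp)
          have hy := integral_sq_fderiv_apply_le (μ := volume) hf hfc (v := (0, 1)) (by simp)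
          linarith
  have h₂ := sq_integral_mul_le_of_hasCompactSupport (μ := volume)
    hf.continuous.abs (hf.continuous_iteratedFDeriv le_rfl).norm
    (hfc.comp_left (g := fun y ↦ |y|) (by simp))
    ((hfc.iteratedFDeriv 2).norm)
  simp only [sq_abs] at h₂
  calc _ ≤ (4 * ∫ x, |f x| * ‖iteratedFDeriv ℝ 2 f x‖) ^ 2 := by gcongr
    _ = 16 * (∫ x, |f x| * ‖iteratedFDeriv ℝ 2 f x‖) ^ 2 := by ring
    _ ≤ _ := by gcongr

/-- The Gagliardo–Nirenberg–Sobolev inequality `‖u‖₂² ≤ K ‖∇u‖₁²` in the plane. -/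
theorem exists_integral_sq_le_mul_sq_integral_norm_fderiv :
    ∃ K : ℝ, 0 ≤ K ∧ ∀ u : ℝ × ℝ → ℝ, ContDiff ℝ 1 u → HasCompactSupport u →
      ∫ x, u x ^ 2 ≤ K * (∫ x, ‖fderiv ℝ u x‖) ^ 2 := by
  have hp : Real.HolderConjugate (Module.finrank ℝ (ℝ × ℝ)) 2 := by
    rw [Module.finrank_prod, Module.finrank_self]
    norm_num
    exact Real.HolderConjugate.two_two
  refine ⟨lintegralPowLePowLIntegralFDerivConst (volume : Measure (ℝ × ℝ)) 2, by positivity,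
    fun u hu huc ↦ ?_⟩
  have h := lintegral_pow_le_pow_lintegral_fderiv volume hu huc hp
  have hi₁ : Integrable (fun x ↦ fderiv ℝ u x) :=
    (hu.continuous_fderiv one_ne_zero).integrable_of_hasCompactSupport (huc.fderiv ℝ)
  have hi₂ : Integrable (fun x ↦ u x ^ 2) :=
    (hu.continuous.pow 2).integrable_of_hasCompactSupport
      huc.sq_real
  have hl : ∫⁻ x, ‖u x‖ₑ ^ (2 : ℝ) = ENNReal.ofReal (∫ x, u x ^ 2) := by
    rw [ofReal_integral_eq_lintegral_ofReal hi₂ (ae_of_all _ fun x ↦ sq_nonneg _)]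
    refine lintegral_congr fun x ↦ ?_
    rw [ENNReal.rpow_two, ← ofReal_norm, ← ENNReal.ofReal_pow (norm_nonneg _),
      Real.norm_eq_abs, sq_abs]
  rw [hl, ← ofReal_integral_norm_eq_lintegral_enorm hi₁, ENNReal.rpow_two,
    ← ENNReal.ofReal_pow (by positivity), ← ENNReal.ofReal_coe_nnreal,
    ← ENNReal.ofReal_mul (by positivity)] at h
  exact (ENNReal.ofReal_le_ofReal_iff (by positivity)).1 h

/-- Ladyzhenskaya's inequality `‖f‖₄⁴ ≤ C ‖f‖₂² ‖∇f‖₂²` in the plane. -/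
theorem exists_integral_pow_four_le :
    ∃ K : ℝ, 0 ≤ K ∧ ∀ f : ℝ × ℝ → ℝ, ContDiff ℝ 1 f → HasCompactSupport f →
      ∫ x, f x ^ 4 ≤ K * ((∫ x, f x ^ 2) * ∫ x, ‖fderiv ℝ f x‖ ^ 2) := by
  obtain ⟨K, hK, h⟩ := exists_integral_sq_le_mul_sq_integral_norm_fderiv
  refine ⟨K * 4, by positivity, fun f hf hfc ↦ ?_⟩
  have h₁ := h (fun x ↦ f x ^ 2) (hf.pow 2) hfc.sq_real
  have e₁ : ∀ x, (f x ^ 2) ^ 2 = f x ^ 4 := fun x ↦ by ring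
  have e₂ : ∀ x, ‖fderiv ℝ (fun y ↦ f y ^ 2) x‖ = 2 * (|f x| * ‖fderiv ℝ f x‖) := fun x ↦ by
    rw [((hf.differentiable one_ne_zero x).hasFDerivAt.pow 2).fderiv, norm_smul]
    simp [mul_assoc]
  simp only [e₁, e₂, integral_const_mul] at h₁
  have h₂ := sq_integral_mul_le_of_hasCompactSupport (μ := volume)
    hf.continuous.abs (hf.continuous_fderiv one_ne_zero).norm
    (hfc.comp_left (g := fun y ↦ |y|) (by simp)) (hfc.fderiv ℝ).norm
  simp only [sq_abs] at h₂
  calc _ ≤ K * (2 * ∫ x, |f x| * ‖fderiv ℝ f x‖) ^ 2 := h₁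
    _ = K * 4 * (∫ x, |f x| * ‖fderiv ℝ f x‖) ^ 2 := by ring
    _ ≤ _ := by gcongr

/-- Gagliardo–Nirenberg in `ℝ²`: `‖f‖_{L⁴} ≤ C ‖f‖_{L¹}^{1/2} ‖∇²f‖_{L²}^{1/2}`. -/
theorem gagliardo_nirenberg_L4_L1_Hessian :
    ∃ C : ℝ, 0 < C ∧ ∀ (f : ℝ × ℝ → ℝ), ContDiff ℝ (⊤ : ℕ∞) f → HasCompactSupport f →
      (∫ x, |f x| ^ (4:ℝ)) ^ ((1:ℝ)/4)
        ≤ C * (∫ x, |f x|) ^ ((1:ℝ)/2)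
            * (∫ x, ‖iteratedFDeriv ℝ 2 f x‖ ^ (2:ℝ)) ^ ((1:ℝ)/4) := by
  obtain ⟨K, hK, h⟩ := exists_integral_pow_four_le
  refine ⟨(16 * K ^ 2 + 1) ^ ((1 : ℝ) / 4), by positivity, fun f hf hfc ↦ ?_⟩
  have hf₁ : ContDiff ℝ 1 f := contDiff_infty.1 hf 1
  have hf₂ : ContDiff ℝ 2 f := contDiff_infty.1 hf 2
  have hL := h f hf₁ hfc
  have hG := sq_integral_sq_norm_fderiv_le hf₂ hfc
  have hI := integral_sq_pow_three_le (μ := volume) hf.continuous hfc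
  have e₁ : ∀ x, |f x| ^ (4 : ℝ) = f x ^ 4 := fun x ↦ by
    rw [show (4 : ℝ) = (4 : ℕ) by norm_num, Real.rpow_natCast, Even.pow_abs (by decide)]
  simp only [e₁, Real.rpow_two]
  have hQ : 0 ≤ ∫ x, f x ^ 4 := integral_nonneg fun x ↦ by positivity
  have hA : 0 ≤ ∫ x, |f x| := by positivity
  have hB : 0 ≤ ∫ x, f x ^ 2 := by positivity
  have hH : 0 ≤ ∫ x, ‖iteratedFDeriv ℝ 2 f x‖ ^ 2 := by positivity
  generalize (∫ x, f x ^ 4) = Q at *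
  generalize (∫ x, |f x|) = A at *
  generalize (∫ x, f x ^ 2) = B at *
  generalize (∫ x, ‖iteratedFDeriv ℝ 2 f x‖ ^ 2) = H at *
  generalize (∫ x, ‖fderiv ℝ f x‖ ^ 2) = G at *
  have hmain : Q ≤ (16 * K ^ 2 + 1) * A ^ 2 * H := by
    rcases hQ.eq_or_lt with h0 | h0
    · rw [← h0]; positivity
    refine le_of_mul_le_mul_left ?_ h0
    calc Q * Q = Q ^ 2 := by ring
      _ ≤ (K * (B * G)) ^ 2 := by gcongr
      _ = K ^ 2 * B ^ 2 * G ^ 2 := by ring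
      _ ≤ K ^ 2 * B ^ 2 * (16 * (B * H)) := by gcongr
      _ = 16 * K ^ 2 * H * B ^ 3 := by ring
      _ ≤ 16 * K ^ 2 * H * (A ^ 2 * Q) := by gcongr
      _ ≤ (16 * K ^ 2 + 1) * H * (A ^ 2 * Q) := by gcongr; linarith
      _ = _ := by ring
  have hA' : A ^ ((1 : ℝ) / 2) = (A ^ 2) ^ ((1 : ℝ) / 4) := by
    rw [← Real.rpow_natCast A 2, ← Real.rpow_mul hA]
    norm_num
  rw [hA', ← Real.mul_rpow (by positivity) (by positivity),
    ← Real.mul_rpow (by positivity) (by positivity)]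
  gcongr
end

section
/- Let f : ℝ² → ℝ² be a C¹ vector field with ∫_{|x|>r₀} |∇f|² dx < ∞ for some r₀ > 0. Then there exists an increasing sequence (r_n) with r_n ∈ (2^n, 2^{n+1}) such that lim_{n→∞} sup_{θ ∈ [0,2π]} |f(r_n,θ)|² / ln r_n = 0. -/
open MeasureTheory Real Filter Set

section PolarEstimates

variable {f : ℝ × ℝ → ℝ × ℝ}

/-- The operator norm of the derivative of `f` at the point with polar coordinates `(s, φ)`. -/
noncomputable def polarGradNorm (f : ℝ × ℝ → ℝ × ℝ) (s φ : ℝ) : ℝ :=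
  ‖fderiv ℝ f (s * cos φ, s * sin φ)‖

/-- The density, with respect to the radius, of the Dirichlet energy of `f`. -/
noncomputable def angularEnergy (f : ℝ × ℝ → ℝ × ℝ) (s : ℝ) : ℝ :=
  ∫ φ in (-π)..π, polarGradNorm f s φ ^ 2 * s

lemma polarGradNorm_nonneg (s φ : ℝ) : 0 ≤ polarGradNorm f s φ := norm_nonneg _

lemma continuous_polarGradNorm (hf : ContDiff ℝ 1 f) :
    Continuous (Function.uncurry (polarGradNorm f)) := by
  have h := hf.continuous_fderiv one_ne_zero
  unfold polarGradNorm Function.uncurry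
  fun_prop

lemma continuous_polarGradNorm_radial (hf : ContDiff ℝ 1 f) (φ : ℝ) :
    Continuous fun s => polarGradNorm f s φ := by
  have h := hf.continuous_fderiv one_ne_zero
  unfold polarGradNorm
  fun_prop

lemma continuous_polarGradNorm_angular (hf : ContDiff ℝ 1 f) (s : ℝ) :
    Continuous fun φ => polarGradNorm f s φ := by
  have h := hf.continuous_fderiv one_ne_zero
  unfold polarGradNorm
  fun_prop

lemma continuous_angularEnergy (hf : ContDiff ℝ 1 f) : Continuous (angularEnergy f) := by
  have h := continuous_polarGradNorm hf
  unfold angularEnergy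
  apply intervalIntegral.continuous_parametric_intervalIntegral_of_continuous'
  exact (h.pow 2).mul continuous_fst

lemma angularEnergy_nonneg {s : ℝ} (hs : 0 ≤ s) : 0 ≤ angularEnergy f s :=
  intervalIntegral.integral_nonneg (by linarith [pi_pos]) fun _ _ => by positivity

lemma half_lt_norm_polar {R s : ℝ} (hs : 2 * R < s) (hR : 0 < R) (φ : ℝ) :
    R < ‖((s * cos φ, s * sin φ) : ℝ × ℝ)‖ := by
  by_contra! h
  rw [Prod.norm_def, sup_le_iff] at h
  simp only [Real.norm_eq_abs] at h
  have h1 := sq_le_sq' (abs_le.1 h.1).1 (abs_le.1 h.1).2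
  have h2 := sq_le_sq' (abs_le.1 h.2).1 (abs_le.1 h.2).2
  have h3 : s ^ 2 ≤ 2 * R ^ 2 := by
    linear_combination h1 + h2 - s ^ 2 * sin_sq_add_cos_sq φ
  nlinarith

lemma integrableOn_angularEnergy {r0 : ℝ} (hr0 : 0 < r0)
    (hD : IntegrableOn (fun x => ‖fderiv ℝ f x‖ ^ 2) {x : ℝ × ℝ | r0 < ‖x‖}) :
    IntegrableOn (angularEnergy f) (Ioi (2 * r0)) := by
  have hsub : Ioi (2 * r0) ×ˢ Ioo (-π) π ⊆ polarCoord.target :=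
    prod_mono (Ioi_subset_Ioi (by positivity)) subset_rfl
  have himage : Set.image polarCoord.symm (Ioi (2 * r0) ×ˢ Ioo (-π) π)
      ⊆ {x : ℝ × ℝ | r0 < ‖x‖} := by
    rintro _ ⟨⟨s, φ⟩, ⟨hs, -⟩, rfl⟩
    exact half_lt_norm_polar hs hr0 φ
  have hpolar := (integrableOn_image_iff_integrableOn_abs_det_fderiv_smul volume
    (measurableSet_Ioi.prod measurableSet_Ioo)
    (fun p _ => (hasFDerivAt_polarCoord_symm p).hasFDerivWithinAt)
    (polarCoord.symm.injOn.mono hsub) _).1 (hD.mono_set himage)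
  rw [IntegrableOn, Measure.volume_eq_prod, ← Measure.prod_restrict] at hpolar
  refine hpolar.integral_prod_left.congr ?_
  filter_upwards [ae_restrict_mem measurableSet_Ioi] with s hs
  have hs0 : 0 < s := lt_trans (by positivity) hs
  rw [angularEnergy, intervalIntegral.integral_of_le (by linarith [pi_pos]),
    integral_Ioc_eq_integral_Ioo]
  simp only [det_fderivPolarCoordSymm, abs_of_pos hs0, smul_eq_mul, polarCoord_symm_apply,
    polarGradNorm, mul_comm]

lemma norm_polar_sub_le_radial (hf : ContDiff ℝ 1 f) {a b : ℝ} (hab : a ≤ b) (φ : ℝ) :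
    ‖f (b * cos φ, b * sin φ) - f (a * cos φ, a * sin φ)‖
      ≤ ∫ s in a..b, polarGradNorm f s φ := by
  have hcont := hf.continuous_fderiv one_ne_zero
  have hderiv (s : ℝ) : HasDerivAt (fun s => f (s * cos φ, s * sin φ))
      (fderiv ℝ f (s * cos φ, s * sin φ) (cos φ, sin φ)) s := by
    refine (hf.differentiable one_ne_zero _).hasFDerivAt.comp_hasDerivAt s (.prodMk ?_ ?_)
    · simpa using (hasDerivAt_id s).mul_const (cos φ)
    · simpa using (hasDerivAt_id s).mul_const (sin φ)
  have hd : Continuous fun s => fderiv ℝ f (s * cos φ, s * sin φ) (cos φ, sin φ) := by fun_prop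
  rw [← intervalIntegral.integral_eq_sub_of_hasDerivAt (fun s _ => hderiv s)
    (hd.intervalIntegrable _ _)]
  have hG : Continuous fun s => polarGradNorm f s φ :=
    continuous_polarGradNorm_radial hf φ
  refine intervalIntegral.norm_integral_le_of_norm_le hab (ae_of_all _ fun s _ => ?_)
    (hG.intervalIntegrable _ _)
  refine (ContinuousLinearMap.le_opNorm _ _).trans (mul_le_of_le_one_right (norm_nonneg _) ?_)
  exact max_le (abs_cos_le_one φ) (abs_sin_le_one φ)

lemma norm_polar_sub_le_angular (hf : ContDiff ℝ 1 f) {s : ℝ} (hs : 0 ≤ s) {α β : ℝ}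
    (hα : α ∈ Icc (-π) π) (hβ : β ∈ Icc (-π) π) :
    ‖f (s * cos β, s * sin β) - f (s * cos α, s * sin α)‖
      ≤ s * ∫ φ in (-π)..π, polarGradNorm f s φ := by
  wlog hab : α ≤ β generalizing α β
  · rw [norm_sub_rev]
    exact this hβ hα (le_of_not_ge hab)
  have hcont := hf.continuous_fderiv one_ne_zero
  have hderiv (φ : ℝ) : HasDerivAt (fun φ => f (s * cos φ, s * sin φ))
      (fderiv ℝ f (s * cos φ, s * sin φ) (s * -sin φ, s * cos φ)) φ :=
    (hf.differentiable one_ne_zero _).hasFDerivAt.comp_hasDerivAt φ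
      (.prodMk ((hasDerivAt_cos φ).const_mul s) ((hasDerivAt_sin φ).const_mul s))
  have hd : Continuous fun φ =>
      fderiv ℝ f (s * cos φ, s * sin φ) (s * -sin φ, s * cos φ) := by fun_prop
  have hG : Continuous fun φ => s * polarGradNorm f s φ :=
    continuous_const.mul (continuous_polarGradNorm_angular hf s)
  rw [← intervalIntegral.integral_eq_sub_of_hasDerivAt (fun φ _ => hderiv φ)
    (hd.intervalIntegrable _ _), ← intervalIntegral.integral_const_mul]
  calc _ ≤ ∫ φ in α..β, s * polarGradNorm f s φ := by
        refine intervalIntegral.norm_integral_le_of_norm_le hab (ae_of_all _ fun φ _ => ?_)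
          (hG.intervalIntegrable _ _)
        refine (ContinuousLinearMap.le_opNorm _ _).trans ?_
        rw [mul_comm s (polarGradNorm f s φ)]
        refine mul_le_mul_of_nonneg_left ?_ (polarGradNorm_nonneg s φ)
        refine max_le ?_ ?_
        · simpa [abs_of_nonneg hs] using mul_le_of_le_one_right hs (abs_sin_le_one φ)
        · simpa [abs_of_nonneg hs] using mul_le_of_le_one_right hs (abs_cos_le_one φ)
    _ ≤ ∫ φ in (-π)..π, s * polarGradNorm f s φ :=
        intervalIntegral.integral_mono_interval hα.1 hab hβ.2
          (ae_of_all _ fun φ => mul_nonneg hs (polarGradNorm_nonneg s φ))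
          (hG.intervalIntegrable _ _)

lemma integral_polarGradNorm_le (hf : ContDiff ℝ 1 f) {s δ : ℝ} (hs : 0 < s) (hδ : 0 < δ) :
    ∫ φ in (-π)..π, polarGradNorm f s φ ≤ π * δ * s⁻¹ + (2 * δ)⁻¹ * angularEnergy f s := by
  have hG : Continuous fun φ => polarGradNorm f s φ :=
    continuous_polarGradNorm_angular hf s
  have hP : Continuous fun φ => (2 * δ)⁻¹ * (polarGradNorm f s φ ^ 2 * s) := by fun_prop
  calc ∫ φ in (-π)..π, polarGradNorm f s φ
      ≤ ∫ φ in (-π)..π, (δ * s⁻¹ / 2 + (2 * δ)⁻¹ * (polarGradNorm f s φ ^ 2 * s)) := by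
        refine intervalIntegral.integral_mono_on (by linarith [pi_pos])
          (hG.intervalIntegrable _ _) ((continuous_const.add hP).intervalIntegrable _ _)
          fun φ _ => ?_
        have h : δ * s⁻¹ / 2 + (2 * δ)⁻¹ * (polarGradNorm f s φ ^ 2 * s) - polarGradNorm f s φ
            = (δ - polarGradNorm f s φ * s) ^ 2 / (2 * δ * s) := by
          field_simp
          ring
        have : 0 ≤ (δ - polarGradNorm f s φ * s) ^ 2 / (2 * δ * s) := by positivity
        linarith
    _ = _ := by
        rw [intervalIntegral.integral_add (by simp) (hP.intervalIntegrable _ _),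
          intervalIntegral.integral_const, intervalIntegral.integral_const_mul, angularEnergy]
        simp only [smul_eq_mul]
        ring

/-- The main pointwise estimate on the circle of radius `r`, in terms of the energy
density at `r` and the energy of the annulus between the radii `R` and `r`. -/
lemma norm_polar_le (hf : ContDiff ℝ 1 f) {R r δ K C η θ : ℝ} (hR : 1 ≤ R) (hRr : R ≤ r)
    (hδ : 0 < δ) (hK : ∀ φ, ‖f (R * cos φ, R * sin φ)‖ ≤ K)
    (hC : r * angularEnergy f r ≤ C) (hη : ∫ s in R..r, angularEnergy f s ≤ η)
    (hθ : θ ∈ Icc (-π) π) :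
    ‖f (r * cos θ, r * sin θ)‖ ≤ K + (π + C / 2) + (δ * log r / 2 + η / (4 * π * δ)) := by
  have hR0 : 0 < R := by linarith
  have hr0 : 0 < r := by linarith
  have hπ := pi_pos
  have hG := continuous_polarGradNorm hf
  have hGswap : Continuous (Function.uncurry fun φ s => polarGradNorm f s φ) := by
    have h := hf.continuous_fderiv one_ne_zero
    unfold polarGradNorm Function.uncurry
    fun_prop
  have hH := continuous_angularEnergy hf
  have hosc : r * ∫ φ in (-π)..π, polarGradNorm f r φ ≤ π + C / 2 := by
    have h := mul_le_mul_of_nonneg_left (integral_polarGradNorm_le hf hr0 one_pos) hr0.le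
    have : r * (π * 1 * r⁻¹ + (2 * 1)⁻¹ * angularEnergy f r)
        = π + r * angularEnergy f r / 2 := by field_simp
    linarith
  have hA : Continuous fun s => ∫ φ in (-π)..π, polarGradNorm f s φ :=
    intervalIntegral.continuous_parametric_intervalIntegral_of_continuous' hG _ _
  have hB : Continuous fun φ => ∫ s in R..r, polarGradNorm f s φ :=
    intervalIntegral.continuous_parametric_intervalIntegral_of_continuous'
      (f := fun φ s => polarGradNorm f s φ) hGswap _ _
  have hinv : IntervalIntegrable (fun s : ℝ => s⁻¹) volume R r :=
    intervalIntegrable_inv_iff.2 (Or.inr (by rw [uIcc_of_le hRr]; exact fun h => by linarith [h.1]))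
  have hrad : ∫ φ in (-π)..π, ∫ s in R..r, polarGradNorm f s φ
      ≤ π * δ * log r + (2 * δ)⁻¹ * η := by
    rw [intervalIntegral_intervalIntegral_swap]
    swap
    · rw [uIoc_of_le (by linarith), uIoc_of_le hRr]
      exact (hGswap.continuousOn.integrableOn_compact
        (isCompact_Icc.prod isCompact_Icc)).mono_set
          (prod_mono Ioc_subset_Icc_self Ioc_subset_Icc_self)
    calc _ ≤ ∫ s in R..r, (π * δ * s⁻¹ + (2 * δ)⁻¹ * angularEnergy f s) := by
          refine intervalIntegral.integral_mono_on hRr (hA.intervalIntegrable _ _)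
            ((hinv.const_mul _).add ((hH.intervalIntegrable _ _).const_mul _)) fun s hs => ?_
          exact integral_polarGradNorm_le hf (by linarith [hs.1]) hδ
      _ = π * δ * log (r / R) + (2 * δ)⁻¹ * ∫ s in R..r, angularEnergy f s := by
          rw [intervalIntegral.integral_add (hinv.const_mul _)
            ((hH.intervalIntegrable _ _).const_mul _), intervalIntegral.integral_const_mul,
            intervalIntegral.integral_const_mul, integral_inv_of_pos hR0 hr0]
      _ ≤ _ := by
          have : log (r / R) ≤ log r :=
            log_le_log (by positivity) (div_le_self hr0.le hR)
          gcongr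
  have hpt (φ : ℝ) (hφ : φ ∈ Icc (-π) π) : ‖f (r * cos θ, r * sin θ)‖
      ≤ (K + (π + C / 2)) + ∫ s in R..r, polarGradNorm f s φ := by
    have h1 := norm_polar_sub_le_angular hf hr0.le hφ hθ
    have h2 := norm_polar_sub_le_radial hf hRr φ
    have h3 := norm_sub_norm_le (f (r * cos θ, r * sin θ)) (f (r * cos φ, r * sin φ))
    have h4 := norm_sub_norm_le (f (r * cos φ, r * sin φ)) (f (R * cos φ, R * sin φ))
    linarith [hK φ]
  have hint : ∫ _ in (-π)..π, ‖f (r * cos θ, r * sin θ)‖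
      ≤ ∫ φ in (-π)..π, ((K + (π + C / 2)) + ∫ s in R..r, polarGradNorm f s φ) :=
    intervalIntegral.integral_mono_on (by linarith) (continuous_const.intervalIntegrable _ _)
      ((continuous_const.add hB).intervalIntegrable _ _) hpt
  rw [intervalIntegral.integral_add (by simp) (hB.intervalIntegrable _ _),
    intervalIntegral.integral_const, intervalIntegral.integral_const] at hint
  simp only [smul_eq_mul] at hint
  have hfin : 2 * π * ‖f (r * cos θ, r * sin θ)‖
      ≤ 2 * π * (K + (π + C / 2) + (δ * log r / 2 + η / (4 * π * δ))) := by
    have : 2 * π * (δ * log r / 2 + η / (4 * π * δ)) = π * δ * log r + (2 * δ)⁻¹ * η := by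
      field_simp
      ring
    linarith
  exact le_of_mul_le_mul_left hfin (by positivity)

lemma exists_radius_mul_angularEnergy_le (hf : ContDiff ℝ 1 f) {a E : ℝ} (ha : 0 < a)
    (hE : ∫ s in a..(2 * a), angularEnergy f s ≤ E) :
    ∃ s ∈ Ioo a (2 * a), s * angularEnergy f s ≤ 2 * E + 1 := by
  by_contra! h
  have hH := continuous_angularEnergy hf
  have hE0 : 0 ≤ E := le_trans (intervalIntegral.integral_nonneg (by linarith)
    fun s hs => angularEnergy_nonneg (by linarith [hs.1])) hE
  have hle := intervalIntegral.integral_mono_on_of_le_Ioo (a := a) (b := 2 * a) (μ := volume)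
    (f := fun _ => (2 * E + 1) / (2 * a)) (by linarith) (by simp) (hH.intervalIntegrable _ _)
    fun s hs => by
      rw [div_le_iff₀ (by positivity)]
      have hs0 : 0 < s := ha.trans hs.1
      have := angularEnergy_nonneg (f := f) hs0.le
      nlinarith [h s hs, hs.2]
  rw [intervalIntegral.integral_const, smul_eq_mul] at hle
  have : (2 * a - a) * ((2 * E + 1) / (2 * a)) = E + 1 / 2 := by
    field_simp
    ring
  linarith

lemma exists_norm_circle_le (hf : Continuous f) (R : ℝ) :
    ∃ K, ∀ φ, ‖f (R * cos φ, R * sin φ)‖ ≤ K := by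
  obtain ⟨K, hK⟩ := (isCompact_closedBall (0 : ℝ × ℝ) |R|).exists_bound_of_continuousOn
    hf.continuousOn
  have hmem (φ : ℝ) : (R * cos φ, R * sin φ) ∈ Metric.closedBall (0 : ℝ × ℝ) |R| := by
    rw [mem_closedBall_zero_iff, Prod.norm_def]
    simp only [norm_mul, Real.norm_eq_abs]
    exact max_le (mul_le_of_le_one_right (abs_nonneg R) (abs_cos_le_one φ))
      (mul_le_of_le_one_right (abs_nonneg R) (abs_sin_le_one φ))
  exact ⟨K, fun φ => hK _ (hmem φ)⟩

lemma exists_tail_integral_le {H : ℝ → ℝ} {R₀ : ℝ} (hH : IntegrableOn H (Ioi R₀)) {η : ℝ}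
    (hη : 0 < η) : ∃ R, R₀ ≤ R ∧ 1 ≤ R ∧ ∫ s in Ioi R, H s ≤ η := by
  have h := tendsto_setIntegral_of_antitone (μ := volume) (f := H)
    (s := fun n : ℕ => Ioi (n : ℝ)) (fun _ => measurableSet_Ioi)
    (fun m n hmn => Ioi_subset_Ioi (by exact_mod_cast hmn))
    ⟨⌈R₀⌉₊, hH.mono_set (Ioi_subset_Ioi (Nat.le_ceil R₀))⟩
  have hempty : ⋂ n : ℕ, Ioi (n : ℝ) = ∅ := by
    refine eq_empty_of_forall_notMem fun x hx => ?_
    obtain ⟨n, hn⟩ := exists_nat_ge x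
    exact absurd (mem_iInter.1 hx n) (not_lt.2 hn)
  rw [hempty, setIntegral_empty] at h
  obtain ⟨n, hn, hnR, hn1⟩ := ((h.eventually_le_const hη).and
    ((eventually_ge_atTop ⌈R₀⌉₊).and (eventually_ge_atTop 1))).exists
  exact ⟨n, (Nat.le_ceil R₀).trans (by exact_mod_cast hnR), by exact_mod_cast hn1, hn⟩

lemma intervalIntegral_angularEnergy_le {R a b : ℝ} (hR : 0 ≤ R)
    (hint : IntegrableOn (angularEnergy f) (Ioi R)) (hRa : R ≤ a) (hab : a ≤ b) :
    ∫ s in a..b, angularEnergy f s ≤ ∫ s in Ioi R, angularEnergy f s := by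
  rw [intervalIntegral.integral_of_le hab]
  refine setIntegral_mono_set hint ?_ (LE.le.eventuallyLE fun s hs => hRa.trans_lt hs.1)
  filter_upwards [ae_restrict_mem measurableSet_Ioi] with s hs
  exact angularEnergy_nonneg (hR.trans (le_of_lt hs))

/-- Along any radii tending to infinity on which `s * angularEnergy f s` stays bounded,
`f` is `o(√(log r))` uniformly in the angle. -/
lemma eventually_norm_sq_le (hf : ContDiff ℝ 1 f) {R₀ C : ℝ} (hR₀ : 0 ≤ R₀)
    (hint : IntegrableOn (angularEnergy f) (Ioi R₀)) {r : ℕ → ℝ} (hr : Tendsto r atTop atTop)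
    (hC : ∀ᶠ n in atTop, r n * angularEnergy f (r n) ≤ C) {ε : ℝ} (hε : 0 < ε) :
    ∀ᶠ n in atTop, ∀ θ ∈ Icc (0 : ℝ) (2 * π),
      ‖f (r n * cos θ, r n * sin θ)‖ ^ 2 ≤ ε * log (r n) := by
  have hπ := pi_gt_three
  obtain ⟨R, hR₀R, hR1, hR⟩ := exists_tail_integral_le hint (η := ε / 4) (by positivity)
  obtain ⟨K, hK⟩ := exists_norm_circle_le hf.continuous R
  have hlog := tendsto_log_atTop.comp hr
  filter_upwards [hC, hr.eventually_ge_atTop R,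
    hlog.eventually_ge_atTop (max 1 (4 * (K + (π + C / 2)) ^ 2 / ε))] with n hCn hRn hLn θ hθ
  simp only [Function.comp_apply, max_le_iff] at hLn
  set L := log (r n)
  have hL0 : 0 < L := by linarith [hLn.1]
  have hη := (intervalIntegral_angularEnergy_le (hR₀.trans hR₀R)
    (hint.mono_set (Ioi_subset_Ioi hR₀R)) le_rfl hRn).trans hR
  have hbound (α : ℝ) (hα : α ∈ Icc (-π) π) :
      ‖f (r n * cos α, r n * sin α)‖ ^ 2 ≤ ε * L := by
    have hsε := sq_sqrt hε.le
    have hsL := sq_sqrt hL0.le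
    have hε0 := sqrt_pos.2 hε
    have hl0 := sqrt_pos.2 hL0
    set e := √ε
    set l := √L
    have h := norm_polar_le hf hR1 hRn (δ := e / (2 * l)) (by positivity) hK hCn hη hα
    have hrem : e / (2 * l) * L / 2 + ε / 4 / (4 * π * (e / (2 * l))) ≤ e * l / 2 := by
      rw [← hsε, ← hsL]
      have : e / (2 * l) * l ^ 2 / 2 + e ^ 2 / 4 / (4 * π * (e / (2 * l)))
          = e * l / 4 + e * l / 8 * π⁻¹ := by
        field_simp
        ring
      rw [this]
      have hπinv : π⁻¹ ≤ 1 := inv_le_one_of_one_le₀ (by linarith)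
      nlinarith [mul_pos hε0 hl0]
    have hconst : K + (π + C / 2) ≤ e * l / 2 := by
      refine le_of_sq_le_sq ?_ (by positivity)
      have h2 := hLn.2
      rw [div_le_iff₀ hε] at h2
      have : (e * l / 2) ^ 2 = ε * L / 4 := by rw [← hsε, ← hsL]; ring
      rw [this]
      linarith
    calc ‖f (r n * cos α, r n * sin α)‖ ^ 2 ≤ (e * l) ^ 2 := by
          gcongr
          linarith
      _ = ε * L := by rw [mul_pow, hsε, hsL]
  rcases le_total θ π with h | h
  · exact hbound θ ⟨by linarith [hθ.1], h⟩
  · have := hbound (θ - 2 * π) ⟨by linarith, by linarith [hθ.2]⟩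
    rwa [cos_sub_two_pi, sin_sub_two_pi] at this

end PolarEstimates

/-- Gilbarg–Weinberger decay along a dyadic sequence of radii: uniform-in-angle decay
`|f(rₙ,θ)|² = o(ln rₙ)`. -/
theorem gilbarg_weinberger_sequence_decay (f : ℝ × ℝ → ℝ × ℝ) (hf : ContDiff ℝ 1 f)
    (r0 : ℝ) (hr0 : 0 < r0)
    (hD : IntegrableOn (fun x => ‖fderiv ℝ f x‖ ^ 2) {x : ℝ × ℝ | r0 < ‖x‖}) :
    ∃ r : ℕ → ℝ, StrictMono r ∧ (∀ n, r n ∈ Ioo ((2:ℝ) ^ n) ((2:ℝ) ^ (n + 1))) ∧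
      Tendsto (fun n =>
          (⨆ θ ∈ Icc (0:ℝ) (2 * π), ‖f (r n * Real.cos θ, r n * Real.sin θ)‖ ^ 2)
            / Real.log (r n))
        atTop (nhds 0) := by
  have hint := integrableOn_angularEnergy hr0 hD
  set E := ∫ s in Ioi (2 * r0), angularEnergy f s
  have hex (n : ℕ) : ∃ s ∈ Ioo ((2 : ℝ) ^ n) (2 ^ (n + 1)),
      2 * r0 ≤ 2 ^ n → s * angularEnergy f s ≤ 2 * E + 1 := by
    have hpos : (0 : ℝ) < 2 ^ n := by positivity
    rw [pow_succ']
    by_cases hn : 2 * r0 ≤ 2 ^ n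
    · obtain ⟨s, hs, hsE⟩ := exists_radius_mul_angularEnergy_le hf hpos
        (intervalIntegral_angularEnergy_le (by positivity) hint hn (by linarith))
      exact ⟨s, hs, fun _ => hsE⟩
    · exact ⟨3 / 2 * 2 ^ n, ⟨by linarith, by linarith⟩, fun h => absurd h hn⟩
  choose r hr hrE using hex
  have htwo := tendsto_pow_atTop_atTop_of_one_lt (one_lt_two : (1 : ℝ) < 2)
  have hrtop : Tendsto r atTop atTop := tendsto_atTop_mono (fun n => (hr n).1.le) htwo
  have hC : ∀ᶠ n in atTop, r n * angularEnergy f (r n) ≤ 2 * E + 1 :=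
    (htwo.eventually_ge_atTop (2 * r0)).mono hrE
  refine ⟨r, strictMono_nat_of_lt_succ fun n => (hr n).2.trans (hr (n + 1)).1, hr, ?_⟩
  have hlog (n : ℕ) : 0 < log (r n) :=
    log_pos ((one_le_pow₀ one_le_two).trans_lt (hr n).1)
  rw [Metric.tendsto_nhds]
  intro ε hε
  filter_upwards [eventually_norm_sq_le hf (by positivity) hint hrtop hC (half_pos hε)] with n hn
  have hsup0 : 0 ≤ ⨆ θ ∈ Icc (0:ℝ) (2 * π), ‖f (r n * Real.cos θ, r n * Real.sin θ)‖ ^ 2 :=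
    Real.iSup_nonneg fun θ => Real.iSup_nonneg fun _ => by positivity
  have hM : 0 ≤ ε / 2 * log (r n) := mul_nonneg (by positivity) (hlog n).le
  rw [Real.dist_eq, sub_zero, abs_of_nonneg (div_nonneg hsup0 (hlog n).le), div_lt_iff₀ (hlog n)]
  refine lt_of_le_of_lt (Real.iSup_le (fun θ => Real.iSup_le (hn θ) hM) hM) ?_
  exact mul_lt_mul_of_pos_right (half_lt_self hε) (hlog n)
end

section
/- Let Ω ⊂ ℝ² be the exterior of a ball and let f ∈ C¹(Ω) satisfy ∇f ∈ L²(Ω) ∩ L^p(Ω) for some 2 < p < ∞. Then lim_{|x|→∞} |f(x)| / √(ln |x|) = 0 uniformly. -/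
open MeasureTheory Real

/-- One-dimensional affine change of variables for the Lebesgue integral. -/
theorem ofReal_mul_lintegral_comp_affine {F : ℝ → ENNReal} (hF : Measurable F) (c : ℝ) {T : ℝ}
    (hT : 0 < T) :
    ENNReal.ofReal T * ∫⁻ t, F (c + T * t) = ∫⁻ u, F u := by
  have h := Real.smul_map_volume_mul_left hT.ne'
  rw [abs_of_pos hT] at h
  rw [← lintegral_add_left_eq_self F c]
  conv_rhs => rw [← h]
  rw [lintegral_smul_measure, lintegral_map (by fun_prop) (by fun_prop), smul_eq_mul]

/-- The integral of a nonnegative function over a cone with apex `x`, written in the coordinates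
`(s, θ) ↦ x + s (1, θ)` with Jacobian `s`, is at most its integral over a half plane. -/
theorem lintegral_cone_le_lintegral_halfPlane {H : ℝ × ℝ → ENNReal} (hH : Measurable H)
    (x : ℝ × ℝ) (T : ℝ) :
    ∫⁻ θ in Set.Icc (-1 : ℝ) 1, ∫⁻ s in Set.Ioc 0 T,
        ENNReal.ofReal s * H (x.1 + s, x.2 + s * θ) ≤
      ∫⁻ y in {y : ℝ × ℝ | x.1 < y.1}, H y := by
  rw [lintegral_lintegral_swap (by fun_prop)]
  calc
    _ ≤ ∫⁻ s in Set.Ioc 0 T, ∫⁻ u, H (x.1 + s, u) := by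
        refine setLIntegral_mono (by fun_prop) fun s hs => ?_
        rw [← ofReal_mul_lintegral_comp_affine (F := fun u => H (x.1 + s, u)) (by fun_prop)
          x.2 hs.1, lintegral_const_mul _ (by fun_prop)]
        exact mul_le_mul_right (setLIntegral_le_lintegral _ _) _
    _ ≤ ∫⁻ s in Set.Ioi 0, ∫⁻ u, H (x.1 + s, u) :=
        lintegral_mono_set Set.Ioc_subset_Ioi_self
    _ = ∫⁻ t in Set.Ioi x.1, ∫⁻ u, H (t, u) := by
        rw [← lintegral_indicator measurableSet_Ioi, ← lintegral_indicator measurableSet_Ioi,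
          ← lintegral_add_left_eq_self ((Set.Ioi x.1).indicator _) x.1]
        congr 1 with s
        simp [Set.indicator]
    _ = ∫⁻ y in {y : ℝ × ℝ | x.1 < y.1}, H y := by
        have : {y : ℝ × ℝ | x.1 < y.1} = Set.Ioi x.1 ×ˢ Set.univ := by ext; simp
        rw [this, Measure.volume_eq_prod, setLIntegral_prod _ hH.aemeasurable]
        simp

/-- Elementary splitting of a slope against the Jacobian weight `s`. -/
theorem le_mul_add_weight {p l g s : ℝ} (hp : 2 < p) (hl : 0 < l) (hg : 0 ≤ g) (hs : 0 < s) :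
    g ≤ s * (g ^ p + l * g ^ (2 : ℝ)) + if s ≤ 1 then s ^ (-(1 / (p - 1))) else 1 / l * s⁻¹ := by
  have hgp : 0 ≤ g ^ p := by positivity
  rw [Real.rpow_two]
  split_ifs with h
  · rcases le_total g (s ^ (-(1 / (p - 1)))) with h1 | h1
    · have : 0 ≤ s * (g ^ p + l * g ^ 2) := by positivity
      linarith
    · have hpos : 0 < s ^ (-(1 / (p - 1))) := by positivity
      have hg0 : 0 < g := hpos.trans_le h1
      have h2 : s⁻¹ ≤ g ^ (p - 1) := by
        calc s⁻¹ = (s ^ (-(1 / (p - 1)))) ^ (p - 1) := by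
              rw [← Real.rpow_mul hs.le, ← Real.rpow_neg_one]
              congr 1
              have : p - 1 ≠ 0 := by linarith
              field_simp
          _ ≤ g ^ (p - 1) := Real.rpow_le_rpow hpos.le h1 (by linarith)
      have h3 : g ^ p = g ^ (p - 1) * g := by
        rw [← Real.rpow_add_one hg0.ne']; simp
      have h4 : 1 ≤ s * g ^ (p - 1) := by
        calc 1 = s * s⁻¹ := by field_simp
          _ ≤ _ := by gcongr
      have h5 : 0 ≤ s * (l * g ^ 2) := by positivity
      rw [h3]
      nlinarith
  · rcases le_total g (1 / l * s⁻¹) with h1 | h1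
    · have : 0 ≤ s * (g ^ p + l * g ^ 2) := by positivity
      linarith
    · have h4 : 1 ≤ s * l * g := by
        calc 1 = s * l * (1 / l * s⁻¹) := by field_simp
          _ ≤ _ := by gcongr
      have h5 : 0 ≤ 1 / l * s⁻¹ := by positivity
      have h6 : 0 ≤ s * g ^ p := by positivity
      nlinarith

/-- The radial weight of `le_mul_add_weight` has an integral of logarithmic growth. -/
theorem lintegral_weight_le {p l T : ℝ} (hp : 2 < p) (hl : 0 < l) (hT : 1 ≤ T) :
    ∫⁻ s in Set.Ioc 0 T,
        ENNReal.ofReal (if s ≤ 1 then s ^ (-(1 / (p - 1))) else 1 / l * s⁻¹) ≤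
      ENNReal.ofReal ((∫ s in (0 : ℝ)..1, s ^ (-(1 / (p - 1)))) + 1 / l * Real.log T) := by
  have hq : -1 < -(1 / (p - 1)) := by
    rw [neg_lt_neg_iff, div_lt_one] <;> linarith
  have hlog : 0 ≤ Real.log T := Real.log_nonneg hT
  rw [← Set.Ioc_union_Ioc_eq_Ioc zero_le_one hT, ENNReal.ofReal_add
    (intervalIntegral.integral_nonneg zero_le_one fun s hs => Real.rpow_nonneg hs.1 _)
    (by positivity)]
  refine (lintegral_union_le _ _ _).trans (add_le_add (le_of_eq ?_) (le_of_eq ?_))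
  · rw [intervalIntegral.integral_of_le zero_le_one, ofReal_integral_eq_lintegral_ofReal]
    · refine setLIntegral_congr_fun measurableSet_Ioc fun s hs => ?_
      simp [hs.2]
    · exact (intervalIntegral.intervalIntegrable_rpow' hq).1
    · exact ae_restrict_of_forall_mem measurableSet_Ioc fun s hs => Real.rpow_nonneg hs.1.le _
  · have h1 : 1 / l * Real.log T = ∫ s in (1 : ℝ)..T, 1 / l * s⁻¹ := by
      rw [intervalIntegral.integral_const_mul, integral_inv_of_pos one_pos (by linarith), div_one]
    rw [h1, intervalIntegral.integral_of_le hT, ofReal_integral_eq_lintegral_ofReal]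
    · refine setLIntegral_congr_fun measurableSet_Ioc fun s hs => ?_
      simp [not_le.2 hs.1]
    · refine (IntervalIntegrable.const_mul ?_ _).1
      refine intervalIntegral.intervalIntegrable_inv (fun s hs => ?_) continuousOn_id
      rw [Set.uIcc_of_le hT] at hs
      linarith [hs.1]
    · refine ae_restrict_of_forall_mem measurableSet_Ioc fun s hs => ?_
      have : 0 < s := one_pos.trans hs.1
      simp only [Pi.zero_apply]
      positivity

/-- Averaged bound for the integral of `g` along the segments of a cone with apex `x`. -/
theorem lintegral_cone_le {g : ℝ × ℝ → ℝ} (hg : Measurable g) (hg0 : ∀ y, 0 ≤ g y) (x : ℝ × ℝ)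
    {p l T : ℝ} (hp : 2 < p) (hl : 0 < l) (hT : 1 ≤ T) :
    ∫⁻ θ in Set.Icc (-1 : ℝ) 1, ∫⁻ s in Set.Ioc 0 T, ENNReal.ofReal (g (x.1 + s, x.2 + s * θ)) ≤
      (∫⁻ y in {y : ℝ × ℝ | x.1 < y.1}, ENNReal.ofReal (g y ^ p + l * g y ^ (2 : ℝ))) +
        ENNReal.ofReal ((∫ s in (0 : ℝ)..1, s ^ (-(1 / (p - 1)))) + 1 / l * Real.log T) * 2 := by
  have hH : Measurable fun y => ENNReal.ofReal (g y ^ p + l * g y ^ (2 : ℝ)) := by fun_prop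
  have hw : Measurable fun s : ℝ =>
      ENNReal.ofReal (if s ≤ 1 then s ^ (-(1 / (p - 1))) else 1 / l * s⁻¹) :=
    (Measurable.ite measurableSet_Iic (by fun_prop) (by fun_prop)).ennreal_ofReal
  calc
    _ ≤ ∫⁻ θ in Set.Icc (-1 : ℝ) 1, ((∫⁻ s in Set.Ioc 0 T, ENNReal.ofReal s *
          ENNReal.ofReal (g (x.1 + s, x.2 + s * θ) ^ p +
            l * g (x.1 + s, x.2 + s * θ) ^ (2 : ℝ))) +
          ∫⁻ s in Set.Ioc 0 T,
            ENNReal.ofReal (if s ≤ 1 then s ^ (-(1 / (p - 1))) else 1 / l * s⁻¹)) := by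
        refine lintegral_mono fun θ => ?_
        rw [← lintegral_add_right _ hw]
        refine setLIntegral_mono (by fun_prop) fun s hs => ?_
        rw [← ENNReal.ofReal_mul hs.1.le]
        exact (ENNReal.ofReal_le_ofReal (le_mul_add_weight hp hl (hg0 _) hs.1)).trans
          ENNReal.ofReal_add_le
    _ ≤ _ := by
        rw [lintegral_add_right _ measurable_const, setLIntegral_const, Real.volume_Icc]
        refine add_le_add (lintegral_cone_le_lintegral_halfPlane hH x T) ?_
        refine mul_le_mul' (lintegral_weight_le hp hl hT) (le_of_eq ?_)
        norm_num

/-- The increment of `f` along a segment of slope at most one is bounded by the integral of the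
norm of its derivative. -/
theorem enorm_sub_le_lintegral_fderiv {r0 : ℝ} {f : ℝ × ℝ → ℝ}
    (hf : ContDiffOn ℝ 1 f {x : ℝ × ℝ | r0 < ‖x‖}) {x : ℝ × ℝ} (hx : r0 < x.1) {T θ : ℝ}
    (hT : 0 ≤ T) (hθ : θ ∈ Set.Icc (-1 : ℝ) 1) :
    ‖f (x.1 + T, x.2 + T * θ) - f x‖ₑ ≤
      ∫⁻ s in Set.Ioc 0 T, ENNReal.ofReal ‖fderiv ℝ f (x.1 + s, x.2 + s * θ)‖ := by
  have hopen : IsOpen {x : ℝ × ℝ | r0 < ‖x‖} := isOpen_lt continuous_const continuous_norm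
  have hmem : ∀ s ∈ Set.Icc 0 T, (x.1 + s, x.2 + s * θ) ∈ {x : ℝ × ℝ | r0 < ‖x‖} := by
    intro s hs
    have h1 := norm_fst_le (x.1 + s, x.2 + s * θ)
    have h2 := le_abs_self (x.1 + s)
    simp only [Real.norm_eq_abs] at h1
    simp only [Set.mem_ofPred_eq]
    linarith [hs.1]
  have hd : ContDiff ℝ 1 fun s : ℝ => (x.1 + s, x.2 + s * θ) := by fun_prop
  have h := enorm_sub_le_lintegral_deriv_of_contDiffOn_Icc (hf.comp hd.contDiffOn hmem) hT
  simp only [Function.comp_def, add_zero, zero_mul, Prod.mk.eta] at h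
  refine h.trans ?_
  rw [setLIntegral_congr Ioc_ae_eq_Icc.symm]
  refine setLIntegral_mono' measurableSet_Ioc fun s hs => ?_
  have hder : HasDerivAt (fun s : ℝ => (x.1 + s, x.2 + s * θ)) ((1 : ℝ), θ) s := by
    refine HasDerivAt.prodMk ((hasDerivAt_id s).const_add _) ?_
    simpa using ((hasDerivAt_id s).mul_const θ).const_add x.2
  have hfd : DifferentiableAt ℝ f (x.1 + s, x.2 + s * θ) :=
    (hf.contDiffAt (hopen.mem_nhds (hmem s ⟨hs.1.le, hs.2⟩))).differentiableAt one_ne_zero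
  have hc := hfd.hasFDerivAt.comp_hasDerivAt s hder
  simp only [Function.comp_def] at hc
  rw [hc.deriv, ← ofReal_norm]
  refine ENNReal.ofReal_le_ofReal ((ContinuousLinearMap.le_opNorm _ _).trans ?_)
  have : ‖((1 : ℝ), θ)‖ ≤ 1 := by
    rw [Prod.norm_mk]
    exact max_le (by simp) (abs_le.2 hθ)
  exact mul_le_of_le_one_right (norm_nonneg _) this

/-- Integrated increment bound between the apex of a cone and a vertical segment in it. -/
theorem lintegral_enorm_sub_le {r0 : ℝ} {f : ℝ × ℝ → ℝ}
    (hf : ContDiffOn ℝ 1 f {x : ℝ × ℝ | r0 < ‖x‖}) {x : ℝ × ℝ} (hx : r0 < x.1)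
    {p l T X : ℝ} (hp : 2 < p) (hl : 0 < l) (hT : 1 ≤ T)
    (hX : ∀ y ∈ Set.Icc (-X) X, |y - x.2| ≤ T) :
    ∫⁻ y in Set.Icc (-X) X, ‖f (x.1 + T, y) - f x‖ₑ ≤
      ENNReal.ofReal T *
        ((∫⁻ y in {y : ℝ × ℝ | x.1 < y.1},
          ENNReal.ofReal (‖fderiv ℝ f y‖ ^ p + l * ‖fderiv ℝ f y‖ ^ (2 : ℝ))) +
        ENNReal.ofReal ((∫ s in (0 : ℝ)..1, s ^ (-(1 / (p - 1)))) + 1 / l * Real.log T) * 2) := by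
  have hT0 : 0 < T := by linarith
  have hg : Measurable fun y => ‖fderiv ℝ f y‖ := (measurable_fderiv ℝ f).norm
  refine le_trans ?_ (mul_le_mul_right
    (lintegral_cone_le hg (fun y => norm_nonneg _) x hp hl hT) _)
  set P : ℝ → ENNReal := fun θ =>
    ∫⁻ s in Set.Ioc 0 T, ENNReal.ofReal ‖fderiv ℝ f (x.1 + s, x.2 + s * θ)‖ with hPdef
  have hP : Measurable P := by
    refine Measurable.lintegral_prod_right' (f := fun q : ℝ × ℝ =>
      ENNReal.ofReal ‖fderiv ℝ f (x.1 + q.2, x.2 + q.2 * q.1)‖) ?_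
    exact (hg.comp (by fun_prop : Measurable fun q : ℝ × ℝ =>
      (x.1 + q.2, x.2 + q.2 * q.1))).ennreal_ofReal
  have hQ : Measurable ((Set.Icc (-1 : ℝ) 1).indicator P) := hP.indicator measurableSet_Icc
  have hscale := ofReal_mul_lintegral_comp_affine
    (F := fun y => (Set.Icc (-1 : ℝ) 1).indicator P ((y - x.2) / T)) (by fun_prop) x.2 hT0
  have hcancel : ∀ t : ℝ, (x.2 + T * t - x.2) / T = t := fun t => by field_simp; ring
  simp only [hcancel] at hscale
  rw [lintegral_indicator measurableSet_Icc] at hscale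
  rw [hscale]
  refine le_trans (setLIntegral_mono (by fun_prop) fun y hy => ?_) (setLIntegral_le_lintegral _ _)
  have hθ : (y - x.2) / T ∈ Set.Icc (-1 : ℝ) 1 := by
    rw [Set.mem_Icc, ← abs_le, abs_div, abs_of_pos hT0, div_le_one hT0]
    exact hX y hy
  rw [Set.indicator_of_mem hθ]
  have h := enorm_sub_le_lintegral_fderiv hf hx hT0.le hθ
  rwa [mul_div_cancel₀ _ hT0.ne', add_sub_cancel] at h

/-- The integral over a far half plane of a function integrable outside a ball is small. -/
theorem exists_halfPlane_integral_le {r0 : ℝ} {h : ℝ × ℝ → ℝ}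
    (hh : IntegrableOn h {x : ℝ × ℝ | r0 < ‖x‖}) {η : ℝ} (hη : 0 < η) :
    ∃ a : ℝ, r0 < a ∧ 1 ≤ a ∧ ∫ y in {y : ℝ × ℝ | a < y.1}, h y ≤ η := by
  have hsub : ∀ a, r0 ≤ a → {y : ℝ × ℝ | a < y.1} ⊆ {x : ℝ × ℝ | r0 < ‖x‖} := fun a ha y hy =>
    (ha.trans_lt hy).trans_le ((le_abs_self _).trans (norm_fst_le y))
  have ht := tendsto_setIntegral_of_antitone (μ := volume) (f := h)
    (s := fun a : ℝ => {y : ℝ × ℝ | a < y.1})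
    (fun a => measurableSet_lt measurable_const measurable_fst)
    (fun a b hab y hy => hab.trans_lt hy) ⟨r0, hh.mono_set (hsub r0 le_rfl)⟩
  have hempty : ⋂ a : ℝ, {y : ℝ × ℝ | a < y.1} = ∅ := by
    ext y
    simp only [Set.mem_iInter, Set.mem_ofPred_eq, Set.mem_empty_iff_false, iff_false, not_forall]
    exact ⟨y.1, lt_irrefl _⟩
  rw [hempty, Measure.restrict_empty, integral_zero_measure] at ht
  obtain ⟨a, ha1, ha2, ha3⟩ := ((Filter.eventually_gt_atTop r0).and
    ((Filter.eventually_ge_atTop 1).and (ht.eventually_le_const hη))).exists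
  exact ⟨a, ha1, ha2, ha3⟩

/-- Comparison of the values of `f` at a point of the right quadrant and at a fixed point of the
horizontal axis. -/
theorem abs_sub_le_of_halfPlane {r0 : ℝ} {f : ℝ × ℝ → ℝ}
    (hf : ContDiffOn ℝ 1 f {x : ℝ × ℝ | r0 < ‖x‖}) {p : ℝ} (hp2 : 2 < p)
    (hL2 : IntegrableOn (fun x => ‖fderiv ℝ f x‖ ^ (2 : ℝ)) {x : ℝ × ℝ | r0 < ‖x‖})
    (hLp : IntegrableOn (fun x => ‖fderiv ℝ f x‖ ^ p) {x : ℝ × ℝ | r0 < ‖x‖})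
    {a l : ℝ} (ha : r0 < a) (ha1 : 1 ≤ a) (hl : 0 < l) {x : ℝ × ℝ} (hax : a ≤ x.1)
    (hx : |x.2| ≤ x.1) :
    |f x - f (a, 0)| ≤ 5 / 2 *
      ((∫ y in {y : ℝ × ℝ | r0 < ‖y‖}, ‖fderiv ℝ f y‖ ^ p) +
        l * (∫ y in {y : ℝ × ℝ | a < y.1}, ‖fderiv ℝ f y‖ ^ (2 : ℝ)) +
        ((∫ s in (0 : ℝ)..1, s ^ (-(1 / (p - 1)))) + 1 / l * Real.log (3 * x.1)) * 2) := by
  obtain ⟨X, x2⟩ := x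
  simp only at hax hx ⊢
  set A := ∫ y in {y : ℝ × ℝ | r0 < ‖y‖}, ‖fderiv ℝ f y‖ ^ p
  set E := ∫ y in {y : ℝ × ℝ | a < y.1}, ‖fderiv ℝ f y‖ ^ (2 : ℝ)
  set C := ∫ s in (0 : ℝ)..1, s ^ (-(1 / (p - 1)))
  set B := A + l * E + (C + 1 / l * Real.log (3 * X)) * 2 with hB
  have hX1 : 1 ≤ X := ha1.trans hax
  have hA : 0 ≤ A := integral_nonneg fun y => by positivity
  have hE : 0 ≤ E := integral_nonneg fun y => by positivity
  have hC : 0 ≤ C :=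
    intervalIntegral.integral_nonneg zero_le_one fun s hs => Real.rpow_nonneg hs.1 _
  have hlog : 0 ≤ Real.log (3 * X) := Real.log_nonneg (by linarith)
  have hsub : {y : ℝ × ℝ | a < y.1} ⊆ {x : ℝ × ℝ | r0 < ‖x‖} := fun y hy =>
    (ha.trans hy).trans_le ((le_abs_self _).trans (norm_fst_le y))
  have hbound : ∀ b T : ℝ, a ≤ b → 1 ≤ T → T ≤ 3 * X →
      (∫⁻ y in {y : ℝ × ℝ | b < y.1},
          ENNReal.ofReal (‖fderiv ℝ f y‖ ^ p + l * ‖fderiv ℝ f y‖ ^ (2 : ℝ))) +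
        ENNReal.ofReal (C + 1 / l * Real.log T) * 2 ≤ ENNReal.ofReal B := by
    intro b T hab hT hTX
    rw [hB, ENNReal.ofReal_add (p := A + l * E) (by positivity) (by positivity),
      ENNReal.ofReal_mul' (q := 2) (by norm_num), ENNReal.ofReal_ofNat]
    refine add_le_add ?_ ?_
    · calc
        _ ≤ ∫⁻ y in {y : ℝ × ℝ | a < y.1},
          ENNReal.ofReal (‖fderiv ℝ f y‖ ^ p + l * ‖fderiv ℝ f y‖ ^ (2 : ℝ)) :=
            lintegral_mono_set fun y hy => hab.trans_lt hy
        _ = ENNReal.ofReal (∫ y in {y : ℝ × ℝ | a < y.1},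
              (‖fderiv ℝ f y‖ ^ p + l * ‖fderiv ℝ f y‖ ^ (2 : ℝ))) := by
            rw [ofReal_integral_eq_lintegral_ofReal]
            · exact (hLp.mono_set hsub).add ((hL2.mono_set hsub).const_mul l)
            · exact Filter.Eventually.of_forall fun y => by
                simp only [Pi.zero_apply]
                positivity
        _ ≤ ENNReal.ofReal (A + l * E) := by
            rw [integral_add (hLp.mono_set hsub) ((hL2.mono_set hsub).const_mul l),
              integral_const_mul]
            refine ENNReal.ofReal_le_ofReal (add_le_add_left ?_ _)
            exact setIntegral_mono_set hLp
              (Filter.Eventually.of_forall fun y => by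
                simp only [Pi.zero_apply]
                positivity) hsub.eventuallyLE
    · gcongr
  have hx' := abs_le.1 hx
  have h1 := (lintegral_enorm_sub_le hf (x := (X, x2)) (T := 2 * X) (X := X) (ha.trans_le hax)
    hp2 hl (by linarith)
    (fun y hy => abs_le.2 ⟨by linarith [hy.1, hx'.2], by linarith [hy.2, hx'.1]⟩)).trans
    (mul_le_mul_right (hbound X _ hax (by linarith) (by linarith)) _)
  have h2 := (lintegral_enorm_sub_le hf (x := (a, 0)) (T := 3 * X - a) (X := X) ha
    hp2 hl (by linarith)
    (fun y hy => abs_le.2 ⟨by simp only; linarith [hy.1], by simp only; linarith [hy.2]⟩)).trans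
    (mul_le_mul_right (hbound a _ le_rfl (by linarith) (by linarith)) _)
  have hcont : Continuous fun y : ℝ => f (3 * X, y) := by
    refine hf.continuousOn.comp_continuous (by fun_prop) fun y => ?_
    have h3 := norm_fst_le (3 * X, y)
    have h4 := le_abs_self (3 * X)
    simp only [Real.norm_eq_abs] at h3
    simp only [Set.mem_ofPred_eq]
    linarith
  rw [show (X, x2).1 + 2 * X = 3 * X by simp only; ring] at h1
  rw [show ((a, 0) : ℝ × ℝ).1 + (3 * X - a) = 3 * X by simp only; ring] at h2
  have hB0 : 0 ≤ B := by positivity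
  have h3 : ENNReal.ofReal (|f (X, x2) - f (a, 0)| * (2 * X)) ≤
      ENNReal.ofReal (2 * X * B + (3 * X - a) * B) := by
    calc
      _ = ∫⁻ _ in Set.Icc (-X) X, ‖f (X, x2) - f (a, 0)‖ₑ := by
          rw [setLIntegral_const, Real.volume_Icc, ← ofReal_norm, Real.norm_eq_abs,
            ← ENNReal.ofReal_mul (abs_nonneg _)]
          congr 2
          ring
      _ ≤ ∫⁻ y in Set.Icc (-X) X, (‖f (3 * X, y) - f (X, x2)‖ₑ + ‖f (3 * X, y) - f (a, 0)‖ₑ) := by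
          refine lintegral_mono fun y => ?_
          rw [← edist_eq_enorm_sub, ← edist_eq_enorm_sub, ← edist_eq_enorm_sub]
          exact edist_triangle_left _ _ _
      _ ≤ _ := by
          have hmeas : Measurable fun y => ‖f (3 * X, y) - f (X, x2)‖ₑ :=
            (hcont.sub continuous_const).enorm.measurable
          rw [lintegral_add_left hmeas, ENNReal.ofReal_add (by positivity)
            (mul_nonneg (by linarith) hB0), ENNReal.ofReal_mul (p := 2 * X) (by positivity),
            ENNReal.ofReal_mul (p := 3 * X - a) (by linarith)]
          exact add_le_add h1 h2
  have hBa : 0 ≤ a * B := mul_nonneg (by linarith) hB0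
  rw [ENNReal.ofReal_le_ofReal_iff (add_nonneg (by positivity)
    (mul_nonneg (by linarith) hB0))] at h3
  have h4 : (2 * X) * |f (X, x2) - f (a, 0)| ≤ (2 * X) * (5 / 2 * B) := by linarith
  exact le_of_mul_le_mul_left h4 (by linarith)

/-- Logarithmic decay in the right quadrant `|x₂| ≤ x₁`. -/
theorem log_decay_right_quadrant {r0 : ℝ} {f : ℝ × ℝ → ℝ}
    (hf : ContDiffOn ℝ 1 f {x : ℝ × ℝ | r0 < ‖x‖}) {p : ℝ} (hp2 : 2 < p)
    (hL2 : IntegrableOn (fun x => ‖fderiv ℝ f x‖ ^ (2 : ℝ)) {x : ℝ × ℝ | r0 < ‖x‖})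
    (hLp : IntegrableOn (fun x => ‖fderiv ℝ f x‖ ^ p) {x : ℝ × ℝ | r0 < ‖x‖})
    {ε : ℝ} (hε : 0 < ε) :
    ∃ R : ℝ, ∀ x : ℝ × ℝ, R ≤ x.1 → |x.2| ≤ x.1 → |f x| ≤ ε * Real.sqrt (Real.log x.1) := by
  set η := ε / 30 with hη
  have hη0 : 0 < η := by positivity
  obtain ⟨a, har, ha1, haE⟩ := exists_halfPlane_integral_le hL2 (η := η ^ 2) (by positivity)
  set A := ∫ y in {y : ℝ × ℝ | r0 < ‖y‖}, ‖fderiv ℝ f y‖ ^ p with hA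
  set C := ∫ s in (0 : ℝ)..1, s ^ (-(1 / (p - 1))) with hC
  have htend : Filter.Tendsto (fun X : ℝ => ε / 2 * Real.sqrt (Real.log X))
      Filter.atTop Filter.atTop :=
    (Real.tendsto_sqrt_atTop.comp Real.tendsto_log_atTop).const_mul_atTop (by positivity)
  obtain ⟨R, hR⟩ := Filter.eventually_atTop.1
    (htend.eventually_ge_atTop (|f (a, 0)| + 5 / 2 * (A + 2 * C)))
  refine ⟨max R (max a 3), fun x hx hx2 => ?_⟩
  have hxR : R ≤ x.1 := (le_max_left _ _).trans hx
  have hxa : a ≤ x.1 := ((le_max_left _ _).trans (le_max_right _ _)).trans hx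
  have hx3 : 3 ≤ x.1 := ((le_max_right _ _).trans (le_max_right _ _)).trans hx
  set S := Real.sqrt (Real.log (3 * x.1)) with hS
  have hlog : 0 < Real.log (3 * x.1) := Real.log_pos (by linarith)
  have hS0 : 0 < S := Real.sqrt_pos.2 hlog
  have hSS : S * S = Real.log (3 * x.1) := Real.mul_self_sqrt hlog.le
  have hS2 : S ≤ 2 * Real.sqrt (Real.log x.1) := by
    rw [hS, show (2 : ℝ) = Real.sqrt 4 by rw [show (4 : ℝ) = 2 ^ 2 by norm_num]; simp,
      ← Real.sqrt_mul (by norm_num)]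
    refine Real.sqrt_le_sqrt ?_
    have h1 : Real.log (3 * x.1) ≤ 2 * Real.log x.1 := by
      rw [Real.log_mul (by norm_num) (by linarith)]
      linarith [Real.log_le_log (by norm_num) hx3]
    linarith [Real.log_nonneg (by linarith : 1 ≤ x.1)]
  have h := abs_sub_le_of_halfPlane hf hp2 hL2 hLp har ha1 (l := S / η) (by positivity) hxa hx2
  rw [← hA, ← hC, ← hSS, show 1 / (S / η) * (S * S) = η * S by field_simp] at h
  have h1 : S / η * (∫ y in {y : ℝ × ℝ | a < y.1}, ‖fderiv ℝ f y‖ ^ (2 : ℝ)) ≤ η * S := by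
    calc _ ≤ S / η * η ^ 2 := by gcongr
      _ = η * S := by field_simp
  have h2 := hR x.1 hxR
  have h3 : |f x| ≤ |f x - f (a, 0)| + |f (a, 0)| := by
    simpa using abs_add_le (f x - f (a, 0)) (f (a, 0))
  have h4 : η * S ≤ η * (2 * Real.sqrt (Real.log x.1)) := by gcongr
  have h5 : η * (2 * Real.sqrt (Real.log x.1)) = ε / 15 * Real.sqrt (Real.log x.1) := by
    rw [hη]; ring
  linarith

/-- Logarithmic decay in the image of the right quadrant under a volume-preserving isometry. -/
theorem log_decay_isometry_quadrant {r0 : ℝ} {f : ℝ × ℝ → ℝ}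
    (hf : ContDiffOn ℝ 1 f {x : ℝ × ℝ | r0 < ‖x‖}) {p : ℝ} (hp2 : 2 < p)
    (hL2 : IntegrableOn (fun x => ‖fderiv ℝ f x‖ ^ (2 : ℝ)) {x : ℝ × ℝ | r0 < ‖x‖})
    (hLp : IntegrableOn (fun x => ‖fderiv ℝ f x‖ ^ p) {x : ℝ × ℝ | r0 < ‖x‖})
    {ε : ℝ} (hε : 0 < ε) (e : (ℝ × ℝ) ≃ₗᵢ[ℝ] (ℝ × ℝ)) (he : MeasurePreserving e) :
    ∃ R : ℝ, ∀ x : ℝ × ℝ, R ≤ x.1 → |x.2| ≤ x.1 →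
      |f (e x)| ≤ ε * Real.sqrt (Real.log x.1) := by
  have hpre : e ⁻¹' {x : ℝ × ℝ | r0 < ‖x‖} = {x : ℝ × ℝ | r0 < ‖x‖} := by
    ext x
    simp
  have hemb : MeasurableEmbedding e := e.toHomeomorph.measurableEmbedding
  have hnorm : ∀ x, ‖fderiv ℝ (f ∘ e) x‖ = ‖fderiv ℝ f (e x)‖ := fun x => by
    have h := e.toContinuousLinearEquiv.comp_right_fderiv (f := f) (x := x)
    have h' : fderiv ℝ (f ∘ e) x =
      (fderiv ℝ f (e x)).comp (e.toContinuousLinearEquiv : (ℝ × ℝ) →L[ℝ] (ℝ × ℝ)) := h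
    rw [h']
    exact ContinuousLinearMap.opNorm_comp_linearIsometryEquiv _ e
  refine log_decay_right_quadrant (r0 := r0) (f := f ∘ e) (p := p) ?_ hp2 ?_ ?_ hε
  · exact hf.comp e.contDiff.contDiffOn hpre.ge
  · simp only [hnorm]
    have := (he.integrableOn_comp_preimage hemb).2 hL2
    rwa [hpre] at this
  · simp only [hnorm]
    have := (he.integrableOn_comp_preimage hemb).2 hLp
    rwa [hpre] at this

/-- Uniform pointwise decay (Galdi, Theorem II.9.1): if `∇f ∈ L² ∩ Lᵖ` on the exterior of a
ball in the plane for some `2 < p < ∞`, then `|f(x)| = o(√(ln|x|))` uniformly. -/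
theorem uniform_log_decay (r0 : ℝ) (hr0 : 0 < r0) (f : ℝ × ℝ → ℝ)
    (hf : ContDiffOn ℝ 1 f {x : ℝ × ℝ | r0 < ‖x‖})
    (p : ℝ) (hp2 : 2 < p)
    (hL2 : IntegrableOn (fun x => ‖fderiv ℝ f x‖ ^ (2:ℝ)) {x : ℝ × ℝ | r0 < ‖x‖})
    (hLp : IntegrableOn (fun x => ‖fderiv ℝ f x‖ ^ p) {x : ℝ × ℝ | r0 < ‖x‖}) :
    ∀ ε : ℝ, 0 < ε → ∃ R : ℝ, r0 < R ∧ ∀ x : ℝ × ℝ, R ≤ ‖x‖ →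
      |f x| ≤ ε * Real.sqrt (Real.log ‖x‖) := by
  intro ε hε
  let swap : (ℝ × ℝ) ≃ₗᵢ[ℝ] (ℝ × ℝ) :=
    { LinearEquiv.prodComm ℝ ℝ ℝ with norm_map' := fun x => by simp [Prod.norm_def, max_comm] }
  have hswap : MeasurePreserving swap := Measure.measurePreserving_swap
  have hneg : MeasurePreserving (LinearIsometryEquiv.neg ℝ (E := ℝ × ℝ)) :=
    Measure.measurePreserving_neg volume
  obtain ⟨R1, h1⟩ := log_decay_right_quadrant hf hp2 hL2 hLp hε
  obtain ⟨R2, h2⟩ := log_decay_isometry_quadrant hf hp2 hL2 hLp hε _ hneg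
  obtain ⟨R3, h3⟩ := log_decay_isometry_quadrant hf hp2 hL2 hLp hε swap hswap
  obtain ⟨R4, h4⟩ := log_decay_isometry_quadrant hf hp2 hL2 hLp hε
    (swap.trans (LinearIsometryEquiv.neg ℝ)) (hneg.comp hswap)
  refine ⟨max (r0 + 1) (max (max R1 R2) (max R3 R4)),
    (lt_add_one r0).trans_le (le_max_left _ _), ?_⟩
  rintro ⟨u, v⟩ hx
  simp only [max_le_iff] at hx
  obtain ⟨-, ⟨hR1, hR2⟩, hR3, hR4⟩ := hx
  rw [Prod.norm_mk, Real.norm_eq_abs, Real.norm_eq_abs] at *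
  rcases le_total |v| |u| with huv | huv
  · rw [max_eq_left huv] at *
    rcases le_total 0 u with hu | hu
    · rw [abs_of_nonneg hu] at *
      exact h1 (u, v) hR1 huv
    · rw [abs_of_nonpos hu] at *
      simpa using h2 (-u, -v) hR2 (by simpa using huv)
  · rw [max_eq_right huv] at *
    rcases le_total 0 v with hv | hv
    · rw [abs_of_nonneg hv] at *
      exact h3 (v, u) hR3 huv
    · rw [abs_of_nonpos hv] at *
      simpa [swap] using h4 (-v, -u) hR4 (by simpa using huv)
end
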